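/- Let Ḡ be the simple graph on vertices {1,…,12} with edge set {12,14,17,18,23,29,2-11,34,36,38,45,4-10,4-12,56,58,5-11,67,6-10,6-12,79,7-11,89,8-12,9-10,10-11,11-12} (written as unordered pairs {1,2},{1,4},{1,7},{1,8},{2,3},{2,9},{2,11},{3,4},{3,6},{3,8},{4,5},{4,10},{4,12},{5,6},{5,8},{5,11},{6,7},{6,10},{6,12},{7,9},{7,11},{8,9},{8,12},{9,10},{10,11},{11,12}), and let G be the complement of Ḡ. Then: (i) the independence number of G equals 2; and (ii) for the Pauli representation (O_α)_{α=1}^{12} of the commutation relations of G acting on ℂ^{2^{12}}, the operator norm of (1/√12) Σ_{α=1}^{12} O_α satisfies ‖(1/√12) Σ_α O_α‖² > 2. Consequently there is a graph G, Hermitian matrices O_α with O_α² = I that anticommute when α,β are adjacent in G and commute otherwise, and real coefficients J_α with Σ_α J_α² = 1, such that ‖Σ_α J_α O_α‖² strictly exceeds the independence number of G. -/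

import Mathlib

open scoped BigOperators

/-- Pauli X matrix. -/
def pauliX : Matrix (Fin 2) (Fin 2) ℂ := !![0, 1; 1, 0]

/-- Pauli Z matrix. -/
def pauliZ : Matrix (Fin 2) (Fin 2) ℂ := !![1, 0; 0, -1]

open Classical in
/-- The Pauli representation of the commutation relations of a graph `G` on `{1,…,n}`:
`O_α = P₁ ⊗ ⋯ ⊗ Pₙ` where `P_α = X`, `P_β = Z` for `β < α` adjacent to `α`, and `P_β = I`
otherwise.  Here `ℂ^{2^n}` is realized as functions `Fin n → Fin 2`, and the Kronecker
product of the `2×2` factors is the matrix whose `(f, g)` entry is the product of the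
entries of the factors. -/
noncomputable def pauliRep {n : ℕ} (G : SimpleGraph (Fin n)) (α : Fin n) :
    Matrix (Fin n → Fin 2) (Fin n → Fin 2) ℂ :=
  Matrix.of fun f g => ∏ i,
    (if i = α then pauliX else if i < α ∧ G.Adj i α then pauliZ else 1) (f i) (g i)

/-- The operator norm of a complex matrix acting on ℂ^d with the standard Hermitian
inner product. -/
noncomputable def matOpNorm {m : Type*} [Fintype m] [DecidableEq m] (M : Matrix m m ℂ) : ℝ :=
  ‖Matrix.toEuclideanCLM (𝕜 := ℂ) M‖

/-- The independence number of `G`: the largest cardinality of a set of vertices no two of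
which are adjacent. -/
noncomputable def indepNum {V : Type*} [Fintype V] (G : SimpleGraph V) : ℕ :=
  sSup {k : ℕ | ∃ s : Finset V, (∀ a ∈ s, ∀ b ∈ s, ¬ G.Adj a b) ∧ s.card = k}

/-- The edges of the complement graph `Ḡ`, on vertices `{1,…,12}`. -/
def exampleEdges : List (ℕ × ℕ) :=
  [(1,2),(1,4),(1,7),(1,8),(2,3),(2,9),(2,11),(3,4),(3,6),(3,8),(4,5),(4,10),(4,12),
   (5,6),(5,8),(5,11),(6,7),(6,10),(6,12),(7,9),(7,11),(8,9),(8,12),(9,10),(10,11),(11,12)]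

/-- The triangle-free graph `Ḡ` on 12 vertices (vertex `i : Fin 12` stands for `i+1`). -/
def exampleGbar : SimpleGraph (Fin 12) :=
  SimpleGraph.fromRel (fun a b => ((a.val + 1, b.val + 1) ∈ exampleEdges))

/-- The example graph `G`, the complement of `Ḡ`. -/
def exampleG : SimpleGraph (Fin 12) := exampleGbarᶜ

/-!
The Pauli representation has the largest norm among all Hermitian realisations of the commutation
relations of `G`. Left multiplication by a generator permutes the ordered monomials up to a sign,
and this signed permutation is exactly how the Pauli representation acts on basis vectors.
Pairing a vector with the adjoints of the monomials, which are unitary, is therefore an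
intertwiner that is isometric up to a constant, so any realisation embeds in copies of the Pauli
representation.

A lower bound for the Pauli representation may hence be computed in a smaller realisation. Pauli
strings on `k` qubits are pairs `(x, z)` of vectors over `𝔽₂` whose commutation is governed by the
symplectic form, so they realise `G` as soon as their Gram matrix for this form is the adjacency
matrix of `G` modulo 2. Six qubits suffice for the example, and there an integer vector `v` gives
`‖(∑ O_α) v‖² / ‖v‖² = 4250 / 177 > 24`. Since `G` is the complement of a triangle-free graph with
an edge, its independence number is 2.
-/

open Matrix

section CommutationRelations

variable {V R : Type*} [Ring R]

/-- The commutation relations of a graph: involutions `a i` that anticommute along the edges of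
`G` and commute otherwise. -/
structure CommutationRelations (G : SimpleGraph V) (a : V → R) : Prop where
  mul_self : ∀ i, a i * a i = 1
  anticomm : ∀ {i j}, G.Adj i j → a i * a j = -(a j * a i)
  comm : ∀ {i j}, ¬G.Adj i j → a i * a j = a j * a i

theorem CommutationRelations.comp {W : Type*} {G : SimpleGraph V} {a : V → R}
    (h : CommutationRelations G a) (φ : W → V) :
    CommutationRelations (G.comap φ) (a ∘ φ) where
  mul_self i := h.mul_self (φ i)
  anticomm hij := h.anticomm hij
  comm hij := h.comm hij

theorem CommutationRelations.map {S F : Type*} [Ring S] [FunLike F R S] [RingHomClass F R S]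
    {G : SimpleGraph V} {a : V → R} (h : CommutationRelations G a) (φ : F) :
    CommutationRelations G (φ ∘ a) where
  mul_self i := by simp only [Function.comp_apply, ← map_mul, h.mul_self, map_one]
  anticomm hij := by simp only [Function.comp_apply, ← map_mul, h.anticomm hij, map_neg]
  comm hij := by simp only [Function.comp_apply, ← map_mul, h.comm hij]

end CommutationRelations

section Monomials

variable {n : ℕ} {R : Type*} [Ring R]

/-- The ordered monomial `a₀ ^ f₀ * a₁ ^ f₁ * ⋯` with exponents `0` or `1`. These monomials label
the standard basis of the space on which the Pauli representation acts. -/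
def orderedMonomial (a : Fin n → R) (f : Fin n → Fin 2) : R :=
  (List.ofFn fun i => a i ^ (f i : ℕ)).prod

/-- The bit string `f` with its bit at `α` flipped. -/
def flipBit (α : Fin n) (f : Fin n → Fin 2) : Fin n → Fin 2 :=
  Function.update f α (f α + 1)

open Classical in
/-- The sign picked up by moving the generator `α` to its place in the ordered monomial with
exponents `f`. -/
noncomputable def reorderSign (G : SimpleGraph (Fin n)) (α : Fin n) (f : Fin n → Fin 2) : ℤˣ :=
  ∏ i, if i < α ∧ G.Adj i α ∧ f i = 1 then -1 else 1

theorem orderedMonomial_succ (a : Fin (n + 1) → R) (f : Fin (n + 1) → Fin 2) :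
    orderedMonomial a f = a 0 ^ (f 0 : ℕ) * orderedMonomial (a ∘ Fin.succ) (f ∘ Fin.succ) := by
  simp only [orderedMonomial, List.ofFn_succ, List.prod_cons, Function.comp_apply]

theorem flipBit_zero_comp_succ (f : Fin (n + 1) → Fin 2) :
    flipBit 0 f ∘ Fin.succ = f ∘ Fin.succ := by
  ext i
  simp [flipBit]

theorem flipBit_succ_comp_succ (α : Fin n) (f : Fin (n + 1) → Fin 2) :
    flipBit α.succ f ∘ Fin.succ = flipBit α (f ∘ Fin.succ) :=
  Function.update_comp_eq_of_injective f (Fin.succ_injective n) α _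

theorem reorderSign_zero (G : SimpleGraph (Fin (n + 1))) (f : Fin (n + 1) → Fin 2) :
    reorderSign G 0 f = 1 := by
  simp [reorderSign]

open Classical in
theorem reorderSign_succ (G : SimpleGraph (Fin (n + 1))) (α : Fin n) (f : Fin (n + 1) → Fin 2) :
    reorderSign G α.succ f = (if G.Adj 0 α.succ ∧ f 0 = 1 then -1 else 1) *
      reorderSign (G.comap Fin.succ) α (f ∘ Fin.succ) := by
  simp [reorderSign, Fin.prod_univ_succ]

open Classical in
theorem CommutationRelations.mul_pow_bit {V : Type*} {G : SimpleGraph V} {a : V → R}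
    (h : CommutationRelations G a) {i j : V} (e : Fin 2) :
    a j * a i ^ (e : ℕ) =
      (if G.Adj i j ∧ e = 1 then -1 else 1 : ℤˣ) • (a i ^ (e : ℕ) * a j) := by
  fin_cases e
  · simp
  · by_cases hij : G.Adj i j
    · simp [hij, h.anticomm hij.symm]
    · simp [hij, h.comm fun hji => hij hji.symm]

theorem CommutationRelations.mul_orderedMonomial {G : SimpleGraph (Fin n)} {a : Fin n → R}
    (h : CommutationRelations G a) (α : Fin n) (f : Fin n → Fin 2) :
    a α * orderedMonomial a f = reorderSign G α f • orderedMonomial a (flipBit α f) := by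
  induction n with
  | zero => exact α.elim0
  | succ n ih =>
    simp only [orderedMonomial_succ]
    cases α using Fin.cases with
    | zero =>
      have hbit : a 0 * a 0 ^ (f 0 : ℕ) = a 0 ^ ((f 0 + 1 : Fin 2) : ℕ) := by
        generalize f 0 = e
        fin_cases e <;> simp [h.mul_self]
      rw [flipBit_zero_comp_succ, reorderSign_zero, one_smul, ← mul_assoc, hbit, flipBit,
        Function.update_self]
    | succ β =>
      have htail := ih (h.comp Fin.succ) β (f ∘ Fin.succ)
      rw [Function.comp_apply] at htail
      have hhead : flipBit β.succ f 0 = f 0 := Function.update_of_ne (Fin.succ_ne_zero β).symm _ _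
      rw [flipBit_succ_comp_succ, reorderSign_succ, hhead, ← mul_assoc, h.mul_pow_bit (i := 0),
        smul_mul_assoc, mul_assoc, htail, mul_smul_comm, smul_smul]

theorem orderedMonomial_mem {S : Type*} [SetLike S R] [SubmonoidClass S R] {s : S}
    {a : Fin n → R} (ha : ∀ i, a i ∈ s) (f : Fin n → Fin 2) : orderedMonomial a f ∈ s :=
  list_prod_mem fun _ hx => by
    obtain ⟨i, rfl⟩ := List.mem_ofFn.mp hx
    exact pow_mem (ha i) _

end Monomials

section OperatorNorm

variable {m : Type*} [Fintype m] [DecidableEq m]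

theorem matOpNorm_smul (c : ℂ) (M : Matrix m m ℂ) : matOpNorm (c • M) = ‖c‖ * matOpNorm M := by
  rw [matOpNorm, map_smul, norm_smul, matOpNorm]

theorem sum_norm_sq_mulVec_le (M : Matrix m m ℂ) (v : m → ℂ) :
    ∑ i, ‖(M *ᵥ v) i‖ ^ 2 ≤ matOpNorm M ^ 2 * ∑ i, ‖v i‖ ^ 2 := by
  have h := (toEuclideanCLM (𝕜 := ℂ) M).le_opNorm (WithLp.toLp 2 v)
  rw [toEuclideanCLM_toLp] at h
  simpa only [mul_pow, EuclideanSpace.norm_sq_eq, matOpNorm] using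
    pow_le_pow_left₀ (norm_nonneg _) h 2

theorem matOpNorm_le_of_sum_norm_sq_mulVec_le {M : Matrix m m ℂ} {C : ℝ} (hC : 0 ≤ C)
    (h : ∀ v : m → ℂ, ∑ i, ‖(M *ᵥ v) i‖ ^ 2 ≤ C ^ 2 * ∑ i, ‖v i‖ ^ 2) : matOpNorm M ≤ C := by
  refine ContinuousLinearMap.opNorm_le_bound _ hC fun v => ?_
  refine le_of_sq_le_sq ?_ (by positivity)
  simpa only [mul_pow, EuclideanSpace.norm_sq_eq, ofLp_toEuclideanCLM] using h v.ofLp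

theorem lt_matOpNorm_sq {M : Matrix m m ℂ} {C : ℝ} (v : m → ℂ)
    (h : C * ∑ i, ‖v i‖ ^ 2 < ∑ i, ‖(M *ᵥ v) i‖ ^ 2) : C < matOpNorm M ^ 2 :=
  lt_of_mul_lt_mul_right (h.trans_le (sum_norm_sq_mulVec_le M v)) (by positivity)

theorem matOpNorm_submatrix_le {k : Type*} [Fintype k] [DecidableEq k] (M : Matrix m m ℂ)
    (e : k ≃ m) : matOpNorm (M.submatrix e e) ≤ matOpNorm M := by
  refine matOpNorm_le_of_sum_norm_sq_mulVec_le (norm_nonneg _) fun v => ?_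
  have h := sum_norm_sq_mulVec_le M (v ∘ e.symm)
  rw [← e.sum_comp, ← e.sum_comp fun i => ‖(v ∘ e.symm) i‖ ^ 2] at h
  simpa [submatrix_mulVec_equiv] using h

theorem matOpNorm_reindexAlgEquiv {k : Type*} [Fintype k] [DecidableEq k] (e : m ≃ k)
    (M : Matrix m m ℂ) : matOpNorm (reindexAlgEquiv ℂ ℂ e M) = matOpNorm M := by
  refine (matOpNorm_submatrix_le M e.symm).antisymm ?_
  simpa using matOpNorm_submatrix_le (reindexAlgEquiv ℂ ℂ e M) e

theorem sum_norm_sq_mulVec_of_mem_unitary {U : Matrix m m ℂ} (hU : U ∈ unitary (Matrix m m ℂ))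
    (v : m → ℂ) : ∑ i, ‖(U *ᵥ v) i‖ ^ 2 = ∑ i, ‖v i‖ ^ 2 := by
  have h : ‖WithLp.toLp 2 (U *ᵥ v)‖ = ‖WithLp.toLp 2 v‖ :=
    (toEuclideanCLM (𝕜 := ℂ) U).norm_map_of_mem_unitary
      (Unitary.map_mem (toEuclideanCLM (n := m) (𝕜 := ℂ)) hU) (WithLp.toLp 2 v)
  have hsq (x : m → ℂ) : ∑ i, ‖x i‖ ^ 2 = ‖WithLp.toLp 2 x‖ ^ 2 :=
    (EuclideanSpace.norm_sq_eq _).symm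
  rw [hsq, hsq, h]

end OperatorNorm


section Universality

variable {n : ℕ} {G : SimpleGraph (Fin n)}

theorem pauliX_apply (a b : Fin 2) : pauliX a b = if b = a + 1 then 1 else 0 := by
  fin_cases a <;> fin_cases b <;> simp [pauliX]

theorem pauliZ_apply (a b : Fin 2) :
    pauliZ a b = if b = a then (if a = 1 then -1 else 1) else 0 := by
  fin_cases a <;> fin_cases b <;> simp [pauliZ]

theorem pauliRep_apply_flipBit (G : SimpleGraph (Fin n)) (α : Fin n) (f : Fin n → Fin 2) :
    pauliRep G α f (flipBit α f) = ((reorderSign G α f : ℤ) : ℂ) := by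
  simp only [pauliRep, reorderSign, of_apply, Units.coe_prod, Int.cast_prod]
  refine Finset.prod_congr rfl fun i _ => ?_
  by_cases hi : i = α
  · subst hi
    simp [pauliX_apply, flipBit]
  · have hfix : flipBit α f i = f i := Function.update_of_ne hi _ _
    by_cases hlt : i < α ∧ G.Adj i α
    · rw [if_neg hi, if_pos hlt, hfix, pauliZ_apply, if_pos rfl]
      by_cases hf : f i = 1 <;> simp [hlt, hf]
    · have hsign : ¬(i < α ∧ G.Adj i α ∧ f i = 1) := fun h => hlt ⟨h.1, h.2.1⟩
      rw [if_neg hi, if_neg hlt, hfix, one_apply_eq, if_neg hsign, Units.val_one, Int.cast_one]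

theorem pauliRep_apply_of_ne {α : Fin n} {f g : Fin n → Fin 2} (h : g ≠ flipBit α f) :
    pauliRep G α f g = 0 := by
  obtain ⟨i, hi⟩ := Function.ne_iff.mp h
  refine Finset.prod_eq_zero (Finset.mem_univ i) ?_
  by_cases hiα : i = α
  · subst hiα
    simpa [pauliX_apply, flipBit] using hi
  · rw [flipBit, Function.update_of_ne hiα] at hi
    split_ifs
    · simp [pauliZ_apply, hi]
    · exact one_apply_ne hi.symm

theorem pauliRep_mulVec (G : SimpleGraph (Fin n)) (α : Fin n) (v : (Fin n → Fin 2) → ℂ)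
    (f : Fin n → Fin 2) : (pauliRep G α *ᵥ v) f = reorderSign G α f • v (flipBit α f) := by
  rw [mulVec, dotProduct, Finset.sum_eq_single (flipBit α f)
    (fun g _ hg => by rw [pauliRep_apply_of_ne hg, zero_mul]) (by simp),
    pauliRep_apply_flipBit, Units.smul_def, zsmul_eq_mul]

variable {m : Type*} [Fintype m] [DecidableEq m] {A : Fin n → Matrix m m ℂ}

/-- The `u`-th matrix coefficients of `w` along the adjoints of the ordered monomials, a vector in
the space of the Pauli representation. -/
noncomputable def monomialCoeff (A : Fin n → Matrix m m ℂ) (w : m → ℂ) (u : m) :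
    (Fin n → Fin 2) → ℂ :=
  fun f => ((orderedMonomial A f)ᴴ *ᵥ w) u

theorem CommutationRelations.pauliRep_mulVec_monomialCoeff (h : CommutationRelations G A)
    (hA : ∀ i, (A i).IsHermitian) (α : Fin n) (w : m → ℂ) (u : m) :
    pauliRep G α *ᵥ monomialCoeff A w u = monomialCoeff A (A α *ᵥ w) u := by
  ext f
  have hmul : (orderedMonomial A f)ᴴ * A α =
      reorderSign G α f • (orderedMonomial A (flipBit α f))ᴴ := by
    rw [← (hA α).eq, ← conjTranspose_mul, h.mul_orderedMonomial, Units.smul_def, Units.smul_def,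
      conjTranspose_zsmul]
  rw [pauliRep_mulVec, monomialCoeff, monomialCoeff, mulVec_mulVec, hmul, Units.smul_def,
    Units.smul_def, smul_mulVec, Pi.smul_apply]

theorem monomialCoeff_sum_smul {ι : Type*} (s : Finset ι) (c : ι → ℂ) (w : ι → m → ℂ) (u : m) :
    monomialCoeff A (∑ α ∈ s, c α • w α) u = ∑ α ∈ s, c α • monomialCoeff A (w α) u := by
  ext f
  simp only [monomialCoeff, mulVec_sum, mulVec_smul, Finset.sum_apply, Pi.smul_apply]

theorem sum_norm_sq_monomialCoeff (hA : ∀ i, A i ∈ unitary (Matrix m m ℂ)) (w : m → ℂ) :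
    ∑ u, ∑ f, ‖monomialCoeff A w u f‖ ^ 2 = 2 ^ n * ∑ u, ‖w u‖ ^ 2 := by
  have hmem (f : Fin n → Fin 2) : (orderedMonomial A f)ᴴ ∈ unitary (Matrix m m ℂ) :=
    Unitary.star_mem (orderedMonomial_mem hA f)
  rw [Finset.sum_comm]
  simp only [monomialCoeff, sum_norm_sq_mulVec_of_mem_unitary (hmem _), Finset.sum_const,
    Finset.card_univ, Fintype.card_fun, Fintype.card_fin, nsmul_eq_mul, Nat.cast_pow,
    Nat.cast_ofNat]

theorem CommutationRelations.matOpNorm_sum_smul_le (h : CommutationRelations G A)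
    (hA : ∀ i, (A i).IsHermitian) (c : Fin n → ℂ) :
    matOpNorm (∑ α, c α • A α) ≤ matOpNorm (∑ α, c α • pauliRep G α) := by
  set S := ∑ α, c α • pauliRep G α
  have hunitary (i : Fin n) : A i ∈ unitary (Matrix m m ℂ) := by
    simp only [Unitary.mem_iff, star_eq_conjTranspose, (hA i).eq, h.mul_self, and_self]
  refine matOpNorm_le_of_sum_norm_sq_mulVec_le (norm_nonneg _) fun w => ?_
  have hS (u : m) : S *ᵥ monomialCoeff A w u = monomialCoeff A ((∑ α, c α • A α) *ᵥ w) u := by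
    simp only [S, sum_mulVec, smul_mulVec, h.pauliRep_mulVec_monomialCoeff hA,
      monomialCoeff_sum_smul]
  refine le_of_mul_le_mul_left ?_ (pow_pos (zero_lt_two' ℝ) n)
  calc 2 ^ n * ∑ u, ‖((∑ α, c α • A α) *ᵥ w) u‖ ^ 2
      = ∑ u, ∑ f, ‖(S *ᵥ monomialCoeff A w u) f‖ ^ 2 := by
        simp only [hS, sum_norm_sq_monomialCoeff hunitary]
    _ ≤ ∑ u, matOpNorm S ^ 2 * ∑ f, ‖monomialCoeff A w u f‖ ^ 2 :=
        Finset.sum_le_sum fun u _ => sum_norm_sq_mulVec_le S _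
    _ = 2 ^ n * (matOpNorm S ^ 2 * ∑ u, ‖w u‖ ^ 2) := by
        rw [← Finset.mul_sum, sum_norm_sq_monomialCoeff hunitary, mul_left_comm]

end Universality

section PauliStrings

variable {ι : Type*} [Fintype ι]

/-- The Pauli string `⨂ i, Z ^ z i * X ^ x i`, on the basis labelled by bit strings `ι → ZMod 2`.
No phase is included, so it is an involution only when it has evenly many factors `Z * X`. -/
def pauliString (x z : ι → ZMod 2) : Matrix (ι → ZMod 2) (ι → ZMod 2) ℂ :=
  of fun f g => if g = f + x then (((-1) ^ (z ⬝ᵥ f) : ℤˣ) : ℤ) else 0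

theorem pauliString_zero_zero : pauliString (0 : ι → ZMod 2) 0 = 1 := by
  ext f g
  simp [pauliString, one_apply, eq_comm]

theorem isHermitian_pauliString {x z : ι → ZMod 2} (h : z ⬝ᵥ x = 0) :
    (pauliString x z).IsHermitian := by
  ext f g
  by_cases hgf : g = f + x
  · have hfg : f = g + x := by rw [hgf, add_assoc, ZModModule.add_self, add_zero]
    simp only [conjTranspose_apply, pauliString, of_apply, if_pos hfg, if_pos hgf]
    simp [hgf, dotProduct_add, h]
  · have hfg : f ≠ g + x := by
      rintro rfl
      exact hgf (by rw [add_assoc, ZModModule.add_self, add_zero])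
    simp [pauliString, hgf, hfg]

variable [DecidableEq ι]

theorem pauliString_mulVec (x z : ι → ZMod 2) (v : (ι → ZMod 2) → ℂ) (f : ι → ZMod 2) :
    (pauliString x z *ᵥ v) f = ((-1) ^ (z ⬝ᵥ f) : ℤˣ) • v (f + x) := by
  simp [pauliString, mulVec, dotProduct, Units.smul_def]

theorem pauliString_mul (x z x' z' : ι → ZMod 2) :
    pauliString x z * pauliString x' z' =
      ((-1) ^ (z' ⬝ᵥ x) : ℤˣ) • pauliString (x + x') (z + z') := by
  refine ext_of_mulVec_single fun g => ?_
  ext f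
  rw [← mulVec_mulVec, Units.smul_def, smul_mulVec, Pi.smul_apply, ← Units.smul_def]
  simp only [pauliString_mulVec, smul_smul, ← uzpow_add]
  rw [dotProduct_add, add_dotProduct, add_assoc f]
  congr 2
  ring

theorem pauliString_mul_self {x z : ι → ZMod 2} (h : z ⬝ᵥ x = 0) :
    pauliString x z * pauliString x z = 1 := by
  rw [pauliString_mul, h, uzpow_zero, one_smul, ZModModule.add_self, ZModModule.add_self,
    pauliString_zero_zero]

theorem pauliString_mul_eq_smul_mul (x z x' z' : ι → ZMod 2) :
    pauliString x z * pauliString x' z' =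
      ((-1) ^ (x ⬝ᵥ z' + z ⬝ᵥ x') : ℤˣ) • (pauliString x' z' * pauliString x z) := by
  rw [pauliString_mul, pauliString_mul, smul_smul, ← uzpow_add, add_comm x', add_comm z',
    add_assoc, ZModModule.add_self, add_zero, dotProduct_comm]

theorem commutationRelations_pauliString {V : Type*} {G : SimpleGraph V} [DecidableRel G.Adj]
    {x z : Matrix V ι (ZMod 2)} (hadj : x * zᵀ + z * xᵀ = G.adjMatrix (ZMod 2))
    (hself : ∀ α, z α ⬝ᵥ x α = 0) :
    CommutationRelations G fun α => pauliString (x α) (z α) := by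
  have hexp (α β : V) : x α ⬝ᵥ z β + z α ⬝ᵥ x β = if G.Adj α β then 1 else 0 :=
    congrFun (congrFun hadj α) β
  refine ⟨fun α => pauliString_mul_self (hself α), fun h => ?_, fun h => ?_⟩
  · rw [pauliString_mul_eq_smul_mul, hexp, if_pos h, uzpow_one, Units.neg_smul, one_smul]
  · rw [pauliString_mul_eq_smul_mul, hexp, if_neg h, uzpow_zero, one_smul]

theorem lt_matOpNorm_sum_pauliString_sq {V : Type*} [Fintype V] (x z : Matrix V ι (ZMod 2))
    {C : ℤ} (w : (ι → ZMod 2) → ℤ)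
    (h : C * ∑ f, w f ^ 2 < ∑ f, (∑ α, ((-1) ^ (z α ⬝ᵥ f) : ℤˣ) • w (f + x α)) ^ 2) :
    (C : ℝ) < matOpNorm (∑ α, pauliString (x α) (z α)) ^ 2 := by
  have hnorm (k : ℤ) : ‖(k : ℂ)‖ ^ 2 = ((k ^ 2 : ℤ) : ℝ) := by
    rw [Complex.norm_intCast, sq_abs, Int.cast_pow]
  have haction (f : ι → ZMod 2) : ((∑ α, pauliString (x α) (z α)) *ᵥ fun g => (w g : ℂ)) f =
      ((∑ α, ((-1) ^ (z α ⬝ᵥ f) : ℤˣ) • w (f + x α) : ℤ) : ℂ) := by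
    simp only [sum_mulVec, Finset.sum_apply, pauliString_mulVec, Units.smul_def, zsmul_eq_mul,
      Int.cast_sum, Int.cast_mul, smul_eq_mul]
  refine lt_matOpNorm_sq (fun g => (w g : ℂ)) ?_
  simp only [haction, hnorm]
  exact_mod_cast h

end PauliStrings

section IndependenceNumber

variable {V : Type*} [Fintype V]

theorem indepNum_eq_simpleGraph_indepNum (G : SimpleGraph V) : indepNum G = G.indepNum := by
  have hset (s : Finset V) : (∀ a ∈ s, ∀ b ∈ s, ¬G.Adj a b) ↔ G.IsIndepSet s :=
    ⟨fun h a ha b hb _ => h a ha b hb, fun h a ha b hb hab => h ha hb hab.ne hab⟩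
  simp only [indepNum, SimpleGraph.indepNum, SimpleGraph.isNIndepSet_iff, hset]

theorem indepNum_compl_eq_two {G : SimpleGraph V} {a b : V} (hab : G.Adj a b)
    (hfree : ∀ a b c, G.Adj a b → G.Adj a c → ¬G.Adj b c) : indepNum Gᶜ = 2 := by
  classical
  rw [indepNum_eq_simpleGraph_indepNum, SimpleGraph.indepNum_compl]
  have hedge : 2 ≤ G.cliqueNum := by
    have hclique : G.IsClique ({a, b} : Finset V) := by simpa using fun _ => hab
    simpa [hab.ne] using hclique.card_le_cliqueNum
  have htriangle : G.CliqueFree 3 := fun s hs => by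
    obtain ⟨x, y, z, hxy, hxz, hyz, -⟩ := SimpleGraph.is3Clique_iff.mp hs
    exact hfree x y z hxy hxz hyz
  obtain ⟨s, hs⟩ := G.exists_isNClique_cliqueNum
  have hlt : G.cliqueNum < 3 := not_le.mp fun h => htriangle.mono h s hs
  omega

end IndependenceNumber

section Example

instance : DecidableRel exampleGbar.Adj :=
  inferInstanceAs (DecidableRel (SimpleGraph.fromRel _).Adj)

instance : DecidableRel exampleG.Adj :=
  inferInstanceAs (DecidableRel exampleGbarᶜ.Adj)

/-- The exponents of `X` in twelve Pauli strings on six qubits realising the commutation relations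
of `exampleG`; row `α` belongs to vertex `α`. -/
def xBits : Matrix (Fin 12) (Fin 6) (ZMod 2) :=
  !![1, 0, 0, 0, 0, 0; 0, 1, 0, 0, 0, 0; 0, 0, 1, 0, 0, 0; 0, 0, 0, 1, 0, 0; 0, 0, 0, 0, 1, 0;
     0, 0, 0, 0, 0, 1; 1, 0, 0, 0, 0, 0; 1, 0, 0, 1, 1, 0; 0, 0, 1, 1, 0, 0; 0, 1, 1, 1, 1, 0;
     1, 1, 1, 1, 1, 1; 0, 1, 0, 1, 0, 0]

/-- The exponents of `Z` in the same strings. The first six strings form the Pauli representation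
of the subgraph induced on the first six vertices. -/
def zBits : Matrix (Fin 12) (Fin 6) (ZMod 2) :=
  !![0, 0, 0, 0, 0, 0; 0, 0, 0, 0, 0, 0; 1, 0, 0, 0, 0, 0; 0, 1, 0, 0, 0, 0; 1, 1, 1, 0, 0, 0;
     1, 1, 0, 1, 0, 0; 0, 1, 0, 1, 0, 1; 0, 1, 1, 1, 1, 1; 1, 0, 1, 1, 0, 0; 1, 1, 1, 1, 1, 0;
     1, 0, 0, 0, 1, 0; 1, 1, 1, 1, 0, 0]

/-- A trial vector for the Rayleigh quotient, indexed by binary expansions with the least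
significant bit first. It was found numerically, by scaling and rounding a leading eigenvector of
the sum of the strings. -/
def testVector : Fin (2 ^ 6) → ℤ :=
  ![3, 0, 1, 2, -1, 2, 0, -1, -2, -3, -2, 0, 0, -2, 0, -1,
    -3, 3, 2, 0, 1, -2, -1, 1, 2, -1, -1, 0, 1, -1, -2, 1,
    -2, -1, 3, -3, 0, -1, -1, 1, -2, 3, 3, -1, 2, 2, -3, -2,
    -1, 0, 0, 1, -1, 1, -2, 0, 1, 0, 2, 1, 3, 0, 0, 0]

theorem xBits_mul_transpose_zBits_add :
    xBits * zBitsᵀ + zBits * xBitsᵀ = exampleG.adjMatrix (ZMod 2) := by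
  decide +kernel

theorem zBits_dotProduct_xBits (α : Fin 12) : zBits α ⬝ᵥ xBits α = 0 := by
  revert α
  decide +kernel

theorem twentyFour_mul_sum_testVector_sq_lt :
    24 * ∑ f, testVector (finFunctionFinEquiv f) ^ 2 <
      ∑ f, (∑ α, ((-1) ^ (zBits α ⬝ᵥ f) : ℤˣ) •
        testVector (finFunctionFinEquiv (f + xBits α))) ^ 2 := by
  decide +kernel

/-- Twelve Pauli strings on six qubits satisfying the commutation relations of `exampleG`. -/
def exampleString (α : Fin 12) : Matrix (Fin 6 → ZMod 2) (Fin 6 → ZMod 2) ℂ :=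
  pauliString (xBits α) (zBits α)

theorem isHermitian_exampleString (α : Fin 12) : (exampleString α).IsHermitian :=
  isHermitian_pauliString (zBits_dotProduct_xBits α)

theorem commutationRelations_exampleString : CommutationRelations exampleG exampleString :=
  commutationRelations_pauliString xBits_mul_transpose_zBits_add zBits_dotProduct_xBits

theorem two_lt_matOpNorm_sum_exampleString_sq :
    2 < matOpNorm (∑ α, ((1 / √12 : ℝ) : ℂ) • exampleString α) ^ 2 := by
  have h : ((24 : ℤ) : ℝ) < matOpNorm (∑ α, exampleString α) ^ 2 :=
    lt_matOpNorm_sum_pauliString_sq xBits zBits _ twentyFour_mul_sum_testVector_sq_lt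
  have hscale : ‖((1 / √12 : ℝ) : ℂ)‖ ^ 2 = 1 / 12 := by
    rw [Complex.norm_real, Real.norm_eq_abs, sq_abs, div_pow, one_pow,
      Real.sq_sqrt (by norm_num)]
  rw [← Finset.smul_sum, matOpNorm_smul, mul_pow, hscale]
  push_cast at h
  linarith

theorem indepNum_exampleG : indepNum exampleG = 2 :=
  indepNum_compl_eq_two (G := exampleGbar) (a := 0) (b := 1) (by decide +kernel)
    (by decide +kernel)

end Example

theorem stmt3 :
    -- (i) the independence number of G equals 2
    indepNum exampleG = 2 ∧
    -- (ii) the Pauli representation of G has ‖(1/√12) Σ_α O_α‖² > 2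
    matOpNorm (((1 / Real.sqrt 12 : ℝ) : ℂ) • ∑ α : Fin 12, pauliRep exampleG α) ^ 2 > 2 ∧
    -- consequently there is a graph G, Hermitian O_α with O_α² = I obeying the commutation
    -- relations of G, and unit-norm real coefficients J, with ‖Σ_α J_α O_α‖² > α(G)
    ∃ (n : ℕ) (G : SimpleGraph (Fin n)) (d : ℕ) (O : Fin n → Matrix (Fin d) (Fin d) ℂ)
      (J : Fin n → ℝ),
      (∀ a, (O a).IsHermitian) ∧
      (∀ a, O a * O a = 1) ∧
      (∀ a b, G.Adj a b → O a * O b = -(O b * O a)) ∧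
      (∀ a b, a ≠ b → ¬ G.Adj a b → O a * O b = O b * O a) ∧
      (∑ a, J a ^ 2 = 1) ∧
      (indepNum G : ℝ) < matOpNorm (∑ a, (J a : ℂ) • O a) ^ 2 := by
  let φ := reindexAlgEquiv ℂ ℂ (Fintype.equivFin (Fin 6 → ZMod 2))
  have hrel := commutationRelations_exampleString.map φ
  have hunit : ∑ _α : Fin 12, (1 / √12) ^ 2 = 1 := by norm_num
  have hnorm : 2 < matOpNorm (∑ α, ((1 / √12 : ℝ) : ℂ) • φ (exampleString α)) ^ 2 := by
    simp only [← map_smul, ← map_sum]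
    rw [matOpNorm_reindexAlgEquiv]
    exact two_lt_matOpNorm_sum_exampleString_sq
  have huniv := commutationRelations_exampleString.matOpNorm_sum_smul_le
    isHermitian_exampleString fun _ => ((1 / √12 : ℝ) : ℂ)
  refine ⟨indepNum_exampleG, ?_, 12, exampleG, _, φ ∘ exampleString, fun _ => 1 / √12,
    fun α => (isHermitian_exampleString α).submatrix _, hrel.mul_self, fun _ _ => hrel.anticomm,
    fun _ _ _ => hrel.comm, hunit, ?_⟩
  · rw [Finset.smul_sum]
    exact two_lt_matOpNorm_sum_exampleString_sq.trans_le
      (pow_le_pow_left₀ (norm_nonneg _) huniv 2)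
  · rw [indepNum_exampleG]
    exact_mod_cast hnorm
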